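/- For T = id = θ^i ⊗ e_i the conjugated structure B_id = (B, D_id, L, I_id) (with D_id = exp(𝔸_id) D exp(−𝔸_id) the BRST operator and I_id = exp(𝔸_id) I exp(−𝔸_id)) satisfies: its horizontal subalgebra is ker I_id = S g* ⊗ A; its basic subalgebra is (S g* ⊗ A)^G; on this basic subalgebra D_id coincides with the Cartan differential 𝖽 = 1 ⊗ d − Σ_k Ω^k ⊗ I_k; and consequently H^*_bas(B_id) ≅ CH^*_G(A). -/

import Mathlib

/-!
Common algebraic framework (following H. Cartan, and Guillemin–Sternberg):
*operations* of a Lie algebra on a ℤ-graded supercommutative algebra.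

For a **compact connected** Lie group `G`, a smooth `G`-action on a graded algebra is
determined infinitesimally, invariance under `G` coincides with infinitesimal invariance
(kernel of the Lie derivative), and `G`-equivariance of maps coincides with infinitesimal
equivariance.  Accordingly the smooth `G`-action is encoded by its infinitesimal Lie
derivative `L` below; topological (Fréchet) requirements, which play no role in the
statements, are omitted.
-/

open scoped TensorProduct

set_option synthInstance.maxHeartbeats 1000000
set_option maxHeartbeats 1600000

noncomputable section

/-- The sign `(-1)^n` for an integer `n`. -/
def sgn (n : ℤ) : ℤ := if Even n then 1 else -1

/-- An *operation* of a real Lie algebra `𝔤` on a `ℤ`-graded supercommutative real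
algebra `A`: a degree `+1` odd derivation `d` with `d² = 0`, an (infinitesimal) action
`L` of `𝔤` by even degree-`0` derivations commuting with `d`, and an equivariant
contraction `I` by odd degree-`(-1)` derivations satisfying anticommutation,
`[L_X, I_Y] = I_[X,Y]` and Cartan's formula `I_X d + d I_X = L_X`. -/
structure Operation (𝔤 : Type) [LieRing 𝔤] [LieAlgebra ℝ 𝔤]
    (A : Type) [Ring A] [Algebra ℝ A] : Type where
  grading : ℤ → Submodule ℝ A
  decomposition : DirectSum.Decomposition grading
  one_mem : (1 : A) ∈ grading 0
  mul_mem : ∀ {m n : ℤ} {a b : A}, a ∈ grading m → b ∈ grading n → a * b ∈ grading (m + n)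
  supercomm : ∀ {m n : ℤ} {a b : A}, a ∈ grading m → b ∈ grading n →
      a * b = sgn (m * n) • (b * a)
  d : Module.End ℝ A
  d_mem : ∀ {n : ℤ} {a : A}, a ∈ grading n → d a ∈ grading (n + 1)
  d_mul : ∀ {n : ℤ} {a : A}, a ∈ grading n → ∀ b : A,
      d (a * b) = d a * b + sgn n • (a * d b)
  d_sq : d ∘ₗ d = 0
  L : 𝔤 →ₗ[ℝ] Module.End ℝ A
  L_mem : ∀ (X : 𝔤) {n : ℤ} {a : A}, a ∈ grading n → L X a ∈ grading n
  L_mul : ∀ (X : 𝔤) (a b : A), L X (a * b) = L X a * b + a * L X b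
  L_bracket : ∀ X Y : 𝔤, L ⁅X, Y⁆ = L X ∘ₗ L Y - L Y ∘ₗ L X
  L_d : ∀ X : 𝔤, L X ∘ₗ d = d ∘ₗ L X
  I : 𝔤 →ₗ[ℝ] Module.End ℝ A
  I_mem : ∀ (X : 𝔤) {n : ℤ} {a : A}, a ∈ grading n → I X a ∈ grading (n - 1)
  I_mul : ∀ (X : 𝔤) {n : ℤ} {a : A}, a ∈ grading n → ∀ b : A,
      I X (a * b) = I X a * b + sgn n • (a * I X b)
  I_I : ∀ X Y : 𝔤, I X ∘ₗ I Y + I Y ∘ₗ I X = 0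
  L_I : ∀ X Y : 𝔤, L X ∘ₗ I Y - I Y ∘ₗ L X = I ⁅X, Y⁆
  cartan : ∀ X : 𝔤, I X ∘ₗ d + d ∘ₗ I X = L X

namespace Operation

variable {𝔤 : Type} [LieRing 𝔤] [LieAlgebra ℝ 𝔤] {A : Type} [Ring A] [Algebra ℝ A]

/-- Invariant elements (`= G`-invariant elements, for `G` compact connected). -/
def inv (op : Operation 𝔤 A) : Submodule ℝ A := ⨅ X : 𝔤, LinearMap.ker (op.L X)

/-- Horizontal elements. -/
def hor (op : Operation 𝔤 A) : Submodule ℝ A := ⨅ X : 𝔤, LinearMap.ker (op.I X)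

/-- Basic elements. -/
def bas (op : Operation 𝔤 A) : Submodule ℝ A := op.inv ⊓ op.hor

end Operation

/-- `n`-cocycles of the complex obtained by restricting `d` to the graded pieces `P n`. -/
def cocycles {A : Type} [AddCommGroup A] [Module ℝ A] (d : Module.End ℝ A)
    (P : ℤ → Submodule ℝ A) (n : ℤ) : Submodule ℝ A :=
  P n ⊓ LinearMap.ker d

/-- Degree-`n` cohomology of the subcomplex `P` (with differential `d`):
cocycles in `P n` modulo `d (P (n-1))`. -/
abbrev gradedCoh {A : Type} [AddCommGroup A] [Module ℝ A] (d : Module.End ℝ A)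
    (P : ℤ → Submodule ℝ A) (n : ℤ) :=
  ↥(cocycles d P n) ⧸
    Submodule.comap (cocycles d P n).subtype (Submodule.map d (P (n - 1)))

/-- Structure constants `C^i_{jk}` of `𝔤`: `⁅e_j, e_k⁆ = C^i_{jk} e_i`. -/
def structConst {ι 𝔤 : Type} [Fintype ι] [LieRing 𝔤] [LieAlgebra ℝ 𝔤]
    (b : Module.Basis ι ℝ 𝔤) (i j k : ι) : ℝ :=
  b.repr ⁅b j, b k⁆ i

/-- The Weil algebra `W_𝔤 = S𝔤* ⊗ Λ𝔤*` of `𝔤`, presented axiomatically: an operation `W`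
together with generators `θ^i` (degree 1) and `Ω^i` (degree 2) on which `d_W`, `L`, `I`
take the classical values, and such that the monomials `Ω^m · θ^S` form a basis
(this pins `W` down as `S𝔤* ⊗ Λ𝔤*`). -/
structure WeilData (ι : Type) [Fintype ι] [DecidableEq ι] [LinearOrder ι]
    {𝔤 : Type} [LieRing 𝔤] [LieAlgebra ℝ 𝔤] (b : Module.Basis ι ℝ 𝔤)
    (W : Type) [Ring W] [Algebra ℝ W] extends Operation 𝔤 W where
  θ : ι → W
  Ω : ι → W
  θ_mem : ∀ i, θ i ∈ grading 1
  Ω_mem : ∀ i, Ω i ∈ grading 2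
  d_θ : ∀ i, d (θ i) =
      (-(1/2 : ℝ)) • ∑ j, ∑ k, structConst b i j k • (θ j * θ k) + Ω i
  d_Ω : ∀ i, d (Ω i) = -∑ j, ∑ k, structConst b i j k • (θ j * Ω k)
  L_θ : ∀ i j, L (b i) (θ j) = -∑ k, structConst b j i k • θ k
  L_Ω : ∀ i j, L (b i) (Ω j) = -∑ k, structConst b j i k • Ω k
  I_θ : ∀ i j, I (b i) (θ j) = if i = j then 1 else 0
  I_Ω : ∀ i j, I (b i) (Ω j) = 0
  free : ∃ w : Module.Basis ((ι →₀ ℕ) × Finset ι) ℝ W, ∀ p : (ι →₀ ℕ) × Finset ι,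
      w p = ((Finset.univ.sort (· ≤ ·)).map fun i => Ω i ^ p.1 i).prod *
        ((p.2.sort (· ≤ ·)).map θ).prod

/-- An algebraic connection on an operation, in the coordinates given by the basis `b`:
elements `θ̃^i` of degree 1 with `I_j θ̃^k = δ^k_j` and `L_k θ̃^i = -C^i_{kj} θ̃^j`
(the latter is `G`-equivariance, infinitesimally). -/
structure Connection {ι : Type} [Fintype ι] [DecidableEq ι]
    {𝔤 : Type} [LieRing 𝔤] [LieAlgebra ℝ 𝔤] (b : Module.Basis ι ℝ 𝔤)
    {A : Type} [Ring A] [Algebra ℝ A] (op : Operation 𝔤 A) where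
  θ : ι → A
  θ_mem : ∀ i, θ i ∈ op.grading 1
  I_θ : ∀ i j, op.I (b i) (θ j) = if i = j then 1 else 0
  L_θ : ∀ i j, op.L (b i) (θ j) = -∑ k, structConst b j i k • θ k

/-- The curvature `ω̃^i = dθ̃^i - ½ C^i_{jk} θ̃^j θ̃^k` of a connection. -/
def Connection.curv {ι : Type} [Fintype ι] [DecidableEq ι]
    {𝔤 : Type} [LieRing 𝔤] [LieAlgebra ℝ 𝔤] {b : Module.Basis ι ℝ 𝔤}
    {A : Type} [Ring A] [Algebra ℝ A] {op : Operation 𝔤 A}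
    (c : Connection b op) (i : ι) : A :=
  op.d (c.θ i) - (1/2 : ℝ) • ∑ j, ∑ k, structConst b i j k • (c.θ j * c.θ k)

end

noncomputable section
open scoped TensorProduct

variable {ι : Type} [Fintype ι] [DecidableEq ι] [LinearOrder ι]
variable {𝔤 : Type} [LieRing 𝔤] [LieAlgebra ℝ 𝔤]
variable {A : Type} [Ring A] [Algebra ℝ A]
variable {W : Type} [Ring W] [Algebra ℝ W]

/-- Truncated exponential `exp(f) = Σ_{n<N} fⁿ/n!` of an endomorphism (all our
exponents are of nilpotent operators, so a suitable finite truncation is exact). -/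
def expEnd {M : Type} [AddCommGroup M] [Module ℝ M] (N : ℕ) (f : Module.End ℝ M) :
    Module.End ℝ M :=
  ∑ n ∈ Finset.range N, ((n.factorial : ℝ)⁻¹) • f ^ n

/-- The operator `𝔸^j_i = θ^j ⊗ I_i` on `B = W_𝔤 ⊗ A`: left multiplication by `θ^j`
composed with the contraction `I_i` of `A` (extended to the tensor product with the
usual Koszul sign operator `ε` of `W`). -/
def AOp (b : Module.Basis ι ℝ 𝔤) (wd : WeilData ι b W) (op : Operation 𝔤 A)
    (ε : Module.End ℝ W) (j i : ι) : Module.End ℝ (W ⊗[ℝ] A) :=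
  TensorProduct.map (LinearMap.mulLeft ℝ (wd.θ j) ∘ₗ ε) (op.I (b i))

/-- `𝔸_T = t^i_j 𝔸^j_i` for `T = t^i_j θ^j ⊗ e_i ∈ 𝔤* ⊗ 𝔤`. -/
def AOpT (b : Module.Basis ι ℝ 𝔤) (wd : WeilData ι b W) (op : Operation 𝔤 A)
    (ε : Module.End ℝ W) (T : ι → ι → ℝ) : Module.End ℝ (W ⊗[ℝ] A) :=
  ∑ i, ∑ j, T i j • AOp b wd op ε j i

/-- The operator `𝕃^j_i = θ^j ⊗ L_i - Ω^j ⊗ I_i` on `B = W_𝔤 ⊗ A`. -/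
def LOp (b : Module.Basis ι ℝ 𝔤) (wd : WeilData ι b W) (op : Operation 𝔤 A)
    (ε : Module.End ℝ W) (j i : ι) : Module.End ℝ (W ⊗[ℝ] A) :=
  TensorProduct.map (LinearMap.mulLeft ℝ (wd.θ j)) (op.L (b i)) -
    TensorProduct.map (LinearMap.mulLeft ℝ (wd.Ω j) ∘ₗ ε) (op.I (b i))

/-- `𝕃_T = t^i_j 𝕃^j_i` for `T = t^i_j θ^j ⊗ e_i ∈ 𝔤* ⊗ 𝔤`. -/
def LOpT (b : Module.Basis ι ℝ 𝔤) (wd : WeilData ι b W) (op : Operation 𝔤 A)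
    (ε : Module.End ℝ W) (T : ι → ι → ℝ) : Module.End ℝ (W ⊗[ℝ] A) :=
  ∑ i, ∑ j, T i j • LOp b wd op ε j i

/-- The differential `D = d_W ⊗ 1 + ε ⊗ d` of the tensor product operation
`B = W_𝔤 ⊗ A` (`ε` the grading/sign operator of `W`). -/
def DTot {b : Module.Basis ι ℝ 𝔤} (wd : WeilData ι b W) (op : Operation 𝔤 A)
    (ε : Module.End ℝ W) : Module.End ℝ (W ⊗[ℝ] A) :=
  LinearMap.rTensor A wd.d + TensorProduct.map ε op.d

/-- The total Lie derivative `L_X = L_X ⊗ 1 + 1 ⊗ L_X` of `B = W_𝔤 ⊗ A`. -/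
def LTot {b : Module.Basis ι ℝ 𝔤} (wd : WeilData ι b W) (op : Operation 𝔤 A)
    (X : 𝔤) : Module.End ℝ (W ⊗[ℝ] A) :=
  LinearMap.rTensor A (wd.L X) + LinearMap.lTensor W (op.L X)

/-- The total contraction `I_X = ι_X ⊗ 1 + ε ⊗ I_X` of `B = W_𝔤 ⊗ A`. -/
def ITot {b : Module.Basis ι ℝ 𝔤} (wd : WeilData ι b W) (op : Operation 𝔤 A)
    (ε : Module.End ℝ W) (X : 𝔤) : Module.End ℝ (W ⊗[ℝ] A) :=
  LinearMap.rTensor A (wd.I X) + TensorProduct.map ε (op.I X)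

/-! ### Statement 8 -/

/-- `𝔸_id = Σ_i 𝔸^i_i`, corresponding to `T = id = θ^i ⊗ e_i`. -/
def AId (b : Module.Basis ι ℝ 𝔤) (wd : WeilData ι b W) (op : Operation 𝔤 A)
    (ε : Module.End ℝ W) : Module.End ℝ (W ⊗[ℝ] A) :=
  ∑ i, AOp b wd op ε i i

/-- The BRST operator `D_id = exp(𝔸_id) D exp(-𝔸_id)`. -/
def DBRST (b : Module.Basis ι ℝ 𝔤) (wd : WeilData ι b W) (op : Operation 𝔤 A)
    (ε : Module.End ℝ W) : Module.End ℝ (W ⊗[ℝ] A) :=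
  expEnd (Fintype.card ι + 1) (AId b wd op ε) ∘ₗ DTot wd op ε ∘ₗ
    expEnd (Fintype.card ι + 1) (-AId b wd op ε)

/-- The conjugated contraction `I_id = exp(𝔸_id) I exp(-𝔸_id)`. -/
def IBRST (b : Module.Basis ι ℝ 𝔤) (wd : WeilData ι b W) (op : Operation 𝔤 A)
    (ε : Module.End ℝ W) (X : 𝔤) : Module.End ℝ (W ⊗[ℝ] A) :=
  expEnd (Fintype.card ι + 1) (AId b wd op ε) ∘ₗ ITot wd op ε X ∘ₗ
    expEnd (Fintype.card ι + 1) (-AId b wd op ε)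

/-- The copy of `S𝔤*` inside `W = S𝔤* ⊗ Λ𝔤*`: the span of the monomials in the `Ω^i`. -/
def symSub (b : Module.Basis ι ℝ 𝔤) (wd : WeilData ι b W) : Submodule ℝ W :=
  Submodule.span ℝ
    (Set.range fun m : ι → ℕ => ((Finset.univ.sort (· ≤ ·)).map fun i => wd.Ω i ^ m i).prod)

/-- The copy of `S𝔤* ⊗ A` inside `W ⊗ A`. -/
def symTensor (b : Module.Basis ι ℝ 𝔤) (wd : WeilData ι b W) (op : Operation 𝔤 A) :
    Submodule ℝ (W ⊗[ℝ] A) :=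
  LinearMap.range (TensorProduct.map (symSub b wd).subtype (LinearMap.id : A →ₗ[ℝ] A))

/-- The basic subalgebra of the conjugated structure `B_id`: joint kernel of the
conjugated contractions `I_id` and of the (unchanged, cf. Statement 7) total Lie
derivatives. -/
def basBRST (b : Module.Basis ι ℝ 𝔤) (wd : WeilData ι b W) (op : Operation 𝔤 A)
    (ε : Module.End ℝ W) : Submodule ℝ (W ⊗[ℝ] A) :=
  (⨅ X : 𝔤, LinearMap.ker (IBRST b wd op ε X)) ⊓
    (⨅ X : 𝔤, LinearMap.ker (LTot wd op X))

/-- The Cartan differential `𝖽 = 1 ⊗ d - Σ_k Ω^k ⊗ I_k`, as an operator on `W ⊗ A`. -/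
def cartanDW (b : Module.Basis ι ℝ 𝔤) (wd : WeilData ι b W) (op : Operation 𝔤 A) :
    Module.End ℝ (W ⊗[ℝ] A) :=
  LinearMap.lTensor W op.d -
    ∑ k, TensorProduct.map (LinearMap.mulLeft ℝ (wd.Ω k)) (op.I (b k))

/-- The degree-`n` part of `W ⊗ A`. -/
def grTensor (b : Module.Basis ι ℝ 𝔤) (wd : WeilData ι b W) (op : Operation 𝔤 A) (n : ℤ) :
    Submodule ℝ (W ⊗[ℝ] A) :=
  ⨆ p : ℤ, LinearMap.range
    (TensorProduct.map ((wd.grading p).subtype) ((op.grading (n - p)).subtype))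

/-- The coadjoint Lie derivative `𝐋ᵢ` on `S𝔤* = ℝ[Ω^j]`. -/
def coadL (b : Module.Basis ι ℝ 𝔤) (i : ι) : Module.End ℝ (MvPolynomial ι ℝ) :=
  (MvPolynomial.mkDerivation ℝ
    (fun j => -∑ k, structConst b j i k • (MvPolynomial.X k : MvPolynomial ι ℝ))).toLinearMap

/-- The Cartan differential on the Cartan model `S𝔤* ⊗ A`. -/
def cartanD (b : Module.Basis ι ℝ 𝔤) (op : Operation 𝔤 A) :
    Module.End ℝ (MvPolynomial ι ℝ ⊗[ℝ] A) :=
  LinearMap.lTensor (MvPolynomial ι ℝ) op.d -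
    ∑ k, TensorProduct.map (LinearMap.mulLeft ℝ (MvPolynomial.X k : MvPolynomial ι ℝ)) (op.I (b k))

/-- The total Lie derivative on the Cartan model `S𝔤* ⊗ A`. -/
def totL (b : Module.Basis ι ℝ 𝔤) (op : Operation 𝔤 A) (i : ι) :
    Module.End ℝ (MvPolynomial ι ℝ ⊗[ℝ] A) :=
  LinearMap.rTensor A (coadL b i) + LinearMap.lTensor (MvPolynomial ι ℝ) (op.L (b i))

/-- The degree-`n` part of the Cartan model `S𝔤* ⊗ A` (`S^p 𝔤*` has degree `2p`). -/
def grCartan (b : Module.Basis ι ℝ 𝔤) (op : Operation 𝔤 A) (n : ℤ) :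
    Submodule ℝ (MvPolynomial ι ℝ ⊗[ℝ] A) :=
  ⨆ p : ℕ, LinearMap.range
    (TensorProduct.map ((MvPolynomial.homogeneousSubmodule ι ℝ p).subtype)
      ((op.grading (n - 2 * p)).subtype))

/-- The invariant subalgebra `(S𝔤* ⊗ A)^G` of the Cartan model. -/
def invCartan (b : Module.Basis ι ℝ 𝔤) (op : Operation 𝔤 A) :
    Submodule ℝ (MvPolynomial ι ℝ ⊗[ℝ] A) :=
  ⨅ i : ι, LinearMap.ker (totL b op i)

/-!
Since `𝔸 = 𝔸_id` is nilpotent, `exp(𝔸) f exp(-𝔸) = Σ_n (ad 𝔸)^n f / n!`, and for `f = D` and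
`f = I_X` the series stops after two steps: it gives `D_id = D + Σ_i (θ^i ⊗ L_i - Ω^i ⊗ I_i)` and
`I_id = I_W ⊗ 1`. The operator `Σ_k θ^k I_k` on the Weil algebra counts the factors `θ^i` of a
monomial, so its kernel, and hence the joint kernel of the contractions, is `S𝔤*`; tensoring with
`A` over a field preserves kernels. On `S𝔤*` the Weil differential equals `Σ_i θ^i L_i`, hence
`D_id = 𝖽 + Σ_i θ^i (L_i ⊗ 1 + 1 ⊗ L_i)` on `S𝔤* ⊗ A`, and the sum vanishes on invariants. The
inclusion of `S𝔤* ⊗ A` therefore identifies the Cartan model with the basic subcomplex.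
-/

section Exponential

attribute [local instance] LieRing.ofAssociativeRing

theorem exp_mulLeft {K R : Type*} [CommRing K] [Ring R] [Algebra K R] [Module ℚ R] {a : R}
    (ha : IsNilpotent a) :
    IsNilpotent.exp (LinearMap.mulLeft K a) = LinearMap.mulLeft K (IsNilpotent.exp a) :=
  (ha.map_exp (Algebra.lmul K R)).symm

theorem exp_mulRight {K R : Type*} [CommRing K] [Ring R] [Algebra K R] [Module ℚ R] {a : R}
    (ha : IsNilpotent a) :
    IsNilpotent.exp (LinearMap.mulRight K a) = LinearMap.mulRight K (IsNilpotent.exp a) := by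
  obtain ⟨n, hn⟩ := ha
  have hn' : LinearMap.mulRight K a ^ n = 0 := by simp [hn]
  ext x
  simp [IsNilpotent.exp_eq_sum hn, IsNilpotent.exp_eq_sum hn', Finset.mul_sum, mul_smul_comm]

theorem exp_mul_mul_exp_neg_eq_sum_ad (K : Type*) {R : Type*} [CommRing K] [Ring R] [Algebra K R]
    [Module ℚ R] {a x : R} (ha : IsNilpotent a) {k : ℕ}
    (hk : (LieAlgebra.ad K R a ^ k) x = 0) :
    IsNilpotent.exp a * x * IsNilpotent.exp (-a) =
      ∑ i ∈ Finset.range k, (i.factorial : ℚ)⁻¹ • (LieAlgebra.ad K R a ^ i) x := by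
  have ad_eq : LieAlgebra.ad K R a = LinearMap.mulLeft K a + LinearMap.mulRight K (-a) := by
    ext y
    simp [Ring.lie_def, sub_eq_add_neg]
  have left_nilpotent : IsNilpotent (LinearMap.mulLeft K a) :=
    (LinearMap.isNilpotent_mulLeft_iff K a).2 ha
  have right_nilpotent : IsNilpotent (LinearMap.mulRight K (-a)) :=
    (LinearMap.isNilpotent_mulRight_iff K (-a)).2 ha.neg
  have left_right : Commute (LinearMap.mulLeft K a) (LinearMap.mulRight K (-a)) :=
    LinearMap.commute_mulLeft_right a (-a)
  calc IsNilpotent.exp a * x * IsNilpotent.exp (-a)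
      = (IsNilpotent.exp (LinearMap.mulLeft K a) *
          IsNilpotent.exp (LinearMap.mulRight K (-a))) x := by
        simp [exp_mulLeft ha, exp_mulRight ha.neg, mul_assoc]
    _ = IsNilpotent.exp (LieAlgebra.ad K R a) • x := by
        rw [ad_eq, IsNilpotent.exp_add_of_commute left_right left_nilpotent right_nilpotent]
        rfl
    _ = _ := IsNilpotent.exp_smul_eq_sum hk
        (ad_eq ▸ left_right.isNilpotent_add left_nilpotent right_nilpotent)

theorem expEnd_eq_exp {M : Type} [AddCommGroup M] [Module ℝ M] [Module ℚ (Module.End ℝ M)]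
    {f : Module.End ℝ M} {N : ℕ} (hf : f ^ N = 0) : expEnd N f = IsNilpotent.exp f := by
  rw [IsNilpotent.exp_eq_sum hf]
  refine Finset.sum_congr rfl fun n _ => ?_
  rw [← Rat.cast_smul_eq_qsmul ℝ, Rat.cast_inv, Rat.cast_natCast]

theorem expEnd_conj_eq_of_lie_lie_lie_eq_zero {M : Type} [AddCommGroup M] [Module ℝ M]
    {a x : Module.End ℝ M} {N : ℕ} (ha : a ^ N = 0) (hx : ⁅a, ⁅a, ⁅a, x⁆⁆⁆ = 0) :
    expEnd N a ∘ₗ x ∘ₗ expEnd N (-a) = x + ⁅a, x⁆ + (2 : ℝ)⁻¹ • ⁅a, ⁅a, x⁆⁆ := by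
  let _ : Module ℚ (Module.End ℝ M) := Module.compHom _ (algebraMap ℚ ℝ)
  have neg_pow_eq_zero : (-a) ^ N = 0 := by rw [neg_pow, ha, mul_zero]
  rw [expEnd_eq_exp ha, expEnd_eq_exp neg_pow_eq_zero]
  refine (mul_assoc _ _ _).symm.trans
    ((exp_mul_mul_exp_neg_eq_sum_ad ℝ ⟨N, ha⟩ (k := 3) hx).trans ?_)
  simp [Finset.sum_range_succ, pow_two, ← Rat.cast_smul_eq_qsmul ℝ]

theorem sum_pow_card_add_one_eq_zero {R κ : Type*} [Semiring R] (s : Finset κ) {f : κ → R}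
    (hcomm : ∀ i j, Commute (f i) (f j)) (hsq : ∀ i, f i ^ 2 = 0) :
    (∑ i ∈ s, f i) ^ (s.card + 1) = 0 := by
  classical
  induction s using Finset.induction_on with
  | empty => simp
  | insert i s hi ih =>
    rw [Finset.sum_insert hi, Finset.card_insert_of_notMem hi]
    have commute_sum : Commute (f i) (∑ j ∈ s, f j) := Commute.sum_right s f _ fun j _ => hcomm i j
    exact commute_sum.add_pow_eq_zero_of_add_le_succ_of_pow_eq_zero (hsq i) ih (by omega)

end Exponential

section TensorProduct

attribute [local instance] LieRing.ofAssociativeRing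

variable {R M N M' N' : Type*} [CommRing R] [AddCommGroup M] [Module R M] [AddCommGroup N]
  [Module R N] [AddCommGroup M'] [Module R M'] [AddCommGroup N'] [Module R N']

theorem tensorMap_zsmul_left (n : ℤ) (f : M →ₗ[R] M') (g : N →ₗ[R] N') :
    TensorProduct.map (n • f) g = n • TensorProduct.map f g := by
  simp only [← Int.cast_smul_eq_zsmul R, TensorProduct.map_smul_left]

theorem tensorMap_neg_left (f : M →ₗ[R] M') (g : N →ₗ[R] N') :
    TensorProduct.map (-f) g = -TensorProduct.map f g := by
  simpa only [neg_smul, one_smul] using tensorMap_zsmul_left (-1) f g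

theorem lie_tensorMap_tensorMap (f f' : Module.End R M) (g g' : Module.End R N) :
    ⁅TensorProduct.map f g, TensorProduct.map f' g'⁆ =
      TensorProduct.map (f * f') (g * g') - TensorProduct.map (f' * f) (g' * g) := by
  rw [Ring.lie_def, TensorProduct.map_mul, TensorProduct.map_mul]

theorem lie_tensorMap_tensorMap_of_commute {f f' : Module.End R M} (h : Commute f f')
    (g g' : Module.End R N) :
    ⁅TensorProduct.map f g, TensorProduct.map f' g'⁆ = TensorProduct.map (f * f') ⁅g, g'⁆ := by
  rw [lie_tensorMap_tensorMap, ← h.eq, Ring.lie_def, sub_eq_iff_eq_add,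
    ← TensorProduct.map_add_right, sub_add_cancel]

theorem lie_tensorMap_tensorMap_of_anticommute {f f' : Module.End R M} (h : f' * f = -(f * f'))
    (g g' : Module.End R N) :
    ⁅TensorProduct.map f g, TensorProduct.map f' g'⁆ =
      TensorProduct.map (f * f') (g * g' + g' * g) := by
  rw [lie_tensorMap_tensorMap, h, tensorMap_neg_left, sub_neg_eq_add, TensorProduct.map_add_right]

theorem lie_tensorMap_rTensor (f f' : Module.End R M) (g : Module.End R N) :
    ⁅TensorProduct.map f g, LinearMap.rTensor N f'⁆ = TensorProduct.map ⁅f, f'⁆ g := by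
  refine TensorProduct.ext' fun x y => ?_
  simp [Ring.lie_def, TensorProduct.sub_tmul]

end TensorProduct

section LinearAlgebra

theorem iInf_ker_eq_iInf_ker_basis {R V M N κ : Type*} [CommRing R] [AddCommGroup V] [Module R V]
    [AddCommGroup M] [Module R M] [AddCommGroup N] [Module R N] (v : Module.Basis κ R V)
    (F : V →ₗ[R] M →ₗ[R] N) :
    ⨅ X, LinearMap.ker (F X) = ⨅ i, LinearMap.ker (F (v i)) := by
  refine le_antisymm (le_iInf fun i => iInf_le _ (v i)) fun x hx => ?_
  simp only [Submodule.mem_iInf, LinearMap.mem_ker] at hx ⊢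
  have flip_eq_zero : F.flip x = 0 := v.ext hx
  exact LinearMap.congr_fun flip_eq_zero

theorem ker_le_span_of_basis_eigenvectors {R M κ : Type*} [CommRing R] [NoZeroDivisors R]
    [AddCommGroup M] [Module R M] (v : Module.Basis κ R M) {f : Module.End R M} {c : κ → R}
    (hf : ∀ q, f (v q) = c q • v q) :
    LinearMap.ker f ≤ Submodule.span R (v '' {q | c q = 0}) := by
  intro x hx
  have repr_f (q : κ) : v.repr (f x) q = c q * v.repr x q := by
    suffices v.coord q ∘ₗ f = c q • v.coord q from LinearMap.congr_fun this x
    refine v.ext fun p => ?_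
    simp only [LinearMap.comp_apply, hf, map_smul, LinearMap.smul_apply, Module.Basis.coord_apply,
      Module.Basis.repr_self, smul_eq_mul]
    obtain rfl | hpq := eq_or_ne p q
    · simp
    · simp [Finsupp.single_eq_of_ne hpq.symm]
  rw [v.mem_span_image]
  intro q hq
  refine (mul_eq_zero.1 ?_).resolve_right (Finsupp.mem_support_iff.1 hq)
  rw [← repr_f, LinearMap.mem_ker.1 hx, map_zero, Finsupp.zero_apply]

theorem mem_span_of_homogeneous_basis {R M κ δ : Type*} [CommRing R] [AddCommGroup M] [Module R M]
    [DecidableEq δ] (ℳ : δ → Submodule R M) [DirectSum.Decomposition ℳ]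
    (v : Module.Basis κ R M) {deg : κ → δ} (hv : ∀ q, v q ∈ ℳ (deg q)) {n : δ} {x : M}
    (hx : x ∈ ℳ n) : x ∈ Submodule.span R (v '' {q | deg q = n}) := by
  let component : M →ₗ[R] M := (ℳ n).subtype ∘ₗ DirectSum.component R δ (fun i => ℳ i) n ∘ₗ
    (DirectSum.decomposeLinearEquiv ℳ).toLinearMap
  have component_apply (y : M) : component y = DirectSum.decompose ℳ y n := rfl
  have range_le : ⊤ ≤ (Submodule.span R (v '' {q | deg q = n})).comap component := by
    rw [← v.span_eq, Submodule.span_le]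
    rintro _ ⟨q, rfl⟩
    rw [SetLike.mem_coe, Submodule.mem_comap, component_apply]
    by_cases hq : deg q = n
    · rw [DirectSum.decompose_of_mem_same _ (hq ▸ hv q)]
      exact Submodule.subset_span ⟨q, hq, rfl⟩
    · rw [DirectSum.decompose_of_mem_ne _ (hv q) hq]
      exact Submodule.zero_mem _
  simpa only [component_apply, DirectSum.decompose_of_mem_same _ hx, Submodule.mem_comap]
    using range_le (Submodule.mem_top (x := x))

theorem range_tensorMap_le_iff {R M N M' N' : Type*} [CommRing R] [AddCommGroup M] [Module R M]
    [AddCommGroup N] [Module R N] [AddCommGroup M'] [Module R M'] [AddCommGroup N'] [Module R N']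
    {f : M →ₗ[R] M'} {g : N →ₗ[R] N'} {P : Submodule R (M' ⊗[R] N')} :
    LinearMap.range (TensorProduct.map f g) ≤ P ↔ ∀ x y, f x ⊗ₜ[R] g y ∈ P := by
  rw [TensorProduct.range_map_eq_span_tmul, Submodule.span_le]
  exact ⟨fun h x y => h ⟨x, y, rfl⟩, by rintro h _ ⟨x, y, rfl⟩; exact h x y⟩

theorem ker_rTensor_eq_range {K M N : Type*} [CommRing K] [AddCommGroup M] [Module K M]
    [AddCommGroup N] [Module K N] [Module.Flat K N] (f : Module.End K M) :
    LinearMap.ker (LinearMap.rTensor N f) =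
      LinearMap.range (LinearMap.rTensor N (LinearMap.ker f).subtype) :=
  LinearMap.exact_iff.1 (Module.Flat.rTensor_exact N (LinearMap.exact_subtype_ker_map f))

end LinearAlgebra

section Parity

attribute [local instance] LieRing.ofAssociativeRing

theorem sgn_mul_self (n : ℤ) : sgn n * sgn n = 1 := by
  unfold sgn
  split_ifs <;> rfl

theorem sgn_add (m n : ℤ) : sgn (m + n) = sgn m * sgn n := by
  unfold sgn
  by_cases hm : Even m <;> by_cases hn : Even n <;> simp [Int.even_add, hm, hn]

theorem sgn_one : sgn 1 = -1 := rfl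

theorem sgn_two_mul (n : ℤ) : sgn (2 * n) = 1 := by
  rw [two_mul, sgn_add, sgn_mul_self]

section KoszulTensor

variable {R C M : Type*} [CommRing R] [Ring C] [Algebra R C] [AddCommGroup M] [Module R M]

/-- The operator `x ⊗ f` on `C ⊗ M` for an odd endomorphism `f` of `M`, bilinear in `x` and `f`:
moving `f` past `C` produces the sign operator `ε` of `C`, so it sends `c ⊗ m` to
`x * ε c ⊗ f m`. -/
def koszulTensor (ε : Module.End R C) : C →ₗ[R] Module.End R M →ₗ[R] Module.End R (C ⊗[R] M) :=
  TensorProduct.mapBilinear (.id R) C M C M ∘ₗ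
    LinearMap.mulRight R ε ∘ₗ LinearMap.mul R C

theorem koszulTensor_apply (ε : Module.End R C) (x : C) (f : Module.End R M) :
    koszulTensor ε x f = TensorProduct.map (LinearMap.mulLeft R x * ε) f :=
  rfl

theorem koszulTensor_one (ε : Module.End R C) (f : Module.End R M) :
    koszulTensor ε 1 f = TensorProduct.map ε f := by
  rw [koszulTensor_apply, LinearMap.mulLeft_one]
  rfl

theorem lie_koszulTensor_rTensor {ε D : Module.End R C} (hD : ε * D = -(D * ε)) {x : C}
    (hDx : ∀ a, D (x * a) = D x * a - x * D a) (f : Module.End R M) :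
    ⁅koszulTensor ε x f, LinearMap.rTensor M D⁆ = -koszulTensor ε (D x) f := by
  have lie_eq : ⁅LinearMap.mulLeft R x * ε, D⁆ = -(LinearMap.mulLeft R (D x) * ε) := by
    rw [Ring.lie_def, mul_assoc, hD]
    ext a
    simp only [LinearMap.sub_apply, LinearMap.neg_apply, Module.End.mul_apply,
      LinearMap.mulLeft_apply, hDx, mul_neg]
    abel
  rw [koszulTensor_apply, lie_tensorMap_rTensor, lie_eq, tensorMap_neg_left, koszulTensor_apply]

end KoszulTensor

namespace Operation

variable {op : Operation 𝔤 A}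

theorem linearMap_ext {M : Type*} [AddCommGroup M] [Module ℝ M] {f g : A →ₗ[ℝ] M}
    (h : ∀ n, ∀ a ∈ op.grading n, f a = g a) : f = g := by
  let _ := op.decomposition
  exact DirectSum.decompose_lhom_ext op.grading fun n => LinearMap.ext fun a => h n a a.2

theorem mul_comm_of_mem_grading_two_mul {n : ℤ} {u : A} (hu : u ∈ op.grading (2 * n)) (a : A) :
    u * a = a * u := by
  suffices LinearMap.mulLeft ℝ u = LinearMap.mulRight ℝ u from LinearMap.congr_fun this a
  refine op.linearMap_ext fun m a ha => ?_
  simp [op.supercomm hu ha, mul_assoc, sgn_two_mul]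

theorem mulLeft_mul_mulLeft_of_mem {m n : ℤ} {u v : A} (hu : u ∈ op.grading m)
    (hv : v ∈ op.grading n) :
    LinearMap.mulLeft ℝ u * LinearMap.mulLeft ℝ v =
      sgn (m * n) • (LinearMap.mulLeft ℝ v * LinearMap.mulLeft ℝ u) := by
  ext a
  simp [← mul_assoc, op.supercomm hu hv, -zsmul_eq_mul]

/-- `ε` is the sign operator of the grading: it acts by `(-1)^n` in degree `n`. -/
def IsParity (op : Operation 𝔤 A) (ε : Module.End ℝ A) : Prop :=
  ∀ n, ∀ a ∈ op.grading n, ε a = sgn n • a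

namespace IsParity

variable {ε : Module.End ℝ A}

theorem mul_self (hε : op.IsParity ε) : ε * ε = 1 := by
  refine op.linearMap_ext fun n a ha => ?_
  rw [Module.End.mul_apply, hε n a ha, map_zsmul, hε n a ha, smul_smul, sgn_mul_self, one_smul,
    Module.End.one_apply]

theorem mul_of_degree (hε : op.IsParity ε) {f : Module.End ℝ A} {k : ℤ}
    (hf : ∀ n, ∀ a ∈ op.grading n, f a ∈ op.grading (n + k)) : ε * f = sgn k • (f * ε) := by
  refine op.linearMap_ext fun n a ha => ?_
  rw [Module.End.mul_apply, hε _ _ (hf n a ha), LinearMap.smul_apply, Module.End.mul_apply,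
    hε n a ha, map_zsmul, smul_smul, sgn_add, mul_comm]

theorem mul_d (hε : op.IsParity ε) : ε * op.d = -(op.d * ε) :=
  (hε.mul_of_degree fun _ _ => op.d_mem).trans (neg_one_smul ℤ _)

theorem mul_I (hε : op.IsParity ε) (X : 𝔤) : ε * op.I X = -(op.I X * ε) :=
  (hε.mul_of_degree (k := -1) fun _ _ => op.I_mem X).trans (neg_one_smul ℤ _)

theorem mul_mulLeft (hε : op.IsParity ε) {n : ℤ} {u : A} (hu : u ∈ op.grading n) :
    ε * LinearMap.mulLeft ℝ u = sgn n • (LinearMap.mulLeft ℝ u * ε) :=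
  hε.mul_of_degree fun m _ ha => add_comm n m ▸ op.mul_mem hu ha

variable {M : Type*} [AddCommGroup M] [Module ℝ M] {x u : A} {n : ℤ}

theorem lie_koszulTensor_koszulTensor (hε : op.IsParity ε) (hx : x ∈ op.grading 1)
    (hu : u ∈ op.grading n) (f g : Module.End ℝ M) :
    ⁅koszulTensor ε x f, koszulTensor ε u g⁆ =
      sgn n • TensorProduct.map (LinearMap.mulLeft ℝ (x * u)) (f * g + g * f) := by
  have mul_parity {m : ℤ} {v w : A} (hw : w ∈ op.grading m) :
      LinearMap.mulLeft ℝ v * ε * (LinearMap.mulLeft ℝ w * ε) =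
        sgn m • (LinearMap.mulLeft ℝ v * LinearMap.mulLeft ℝ w) := by
    rw [mul_assoc, ← mul_assoc ε, hε.mul_mulLeft hw, smul_mul_assoc, mul_smul_comm,
      mul_assoc _ ε ε, hε.mul_self, mul_one]
  rw [koszulTensor_apply, koszulTensor_apply, lie_tensorMap_tensorMap_of_anticommute, mul_parity hu,
    tensorMap_zsmul_left, LinearMap.mulLeft_mul]
  · rfl
  · rw [mul_parity hu, mul_parity hx, mulLeft_mul_mulLeft_of_mem hx hu, smul_smul, one_mul,
      sgn_mul_self, one_smul, sgn_one, neg_one_smul]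

theorem lie_koszulTensor_tensorMap_mulLeft (hε : op.IsParity ε) (hx : x ∈ op.grading 1)
    (hu : u ∈ op.grading n) (f g : Module.End ℝ M) :
    ⁅koszulTensor ε x f, TensorProduct.map (LinearMap.mulLeft ℝ u) g⁆ =
      sgn n • koszulTensor ε (x * u) ⁅f, g⁆ := by
  have mul_parity : LinearMap.mulLeft ℝ x * ε * LinearMap.mulLeft ℝ u =
      sgn n • (LinearMap.mulLeft ℝ (x * u) * ε) := by
    rw [mul_assoc, hε.mul_mulLeft hu, mul_smul_comm, ← mul_assoc, LinearMap.mulLeft_mul]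
    rfl
  have commute : Commute (LinearMap.mulLeft ℝ x * ε) (LinearMap.mulLeft ℝ u) := by
    rw [commute_iff_eq, mul_parity, ← mul_assoc, mulLeft_mul_mulLeft_of_mem hu hx, mul_one,
      LinearMap.mulLeft_mul, smul_mul_assoc]
    rfl
  rw [koszulTensor_apply, lie_tensorMap_tensorMap_of_commute commute, mul_parity,
    tensorMap_zsmul_left, koszulTensor_apply]

end IsParity

end Operation

end Parity

section Conjugation

attribute [local instance] LieRing.ofAssociativeRing

namespace Operation

variable (op : Operation 𝔤 A)

theorem d_mul_of_mem_one {x : A} (hx : x ∈ op.grading 1) (a : A) :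
    op.d (x * a) = op.d x * a - x * op.d a := by
  rw [op.d_mul hx, sgn_one, neg_one_smul, sub_eq_add_neg]

theorem I_mul_of_mem_one (X : 𝔤) {x : A} (hx : x ∈ op.grading 1) (a : A) :
    op.I X (x * a) = op.I X x * a - x * op.I X a := by
  rw [op.I_mul X hx, sgn_one, neg_one_smul, sub_eq_add_neg]

theorem I_mul_I_add (X Y : 𝔤) : op.I X * op.I Y + op.I Y * op.I X = 0 :=
  op.I_I X Y

theorem I_mul_self (X : 𝔤) : op.I X * op.I X = 0 :=
  (smul_eq_zero_iff_right (two_ne_zero' ℝ)).1 ((two_smul ℝ _).trans (op.I_mul_I_add X X))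

theorem lie_I_L (X Y : 𝔤) : ⁅op.I X, op.L Y⁆ = -op.I ⁅Y, X⁆ := by
  rw [← op.L_I, neg_sub]
  rfl

end Operation

variable {b : Module.Basis ι ℝ 𝔤} (wd : WeilData ι b W) (op : Operation 𝔤 A) {ε : Module.End ℝ W}

namespace WeilData

theorem I_apply_θ (X : 𝔤) (j : ι) : wd.I X (wd.θ j) = b.repr X j • (1 : W) := by
  suffices wd.I.flip (wd.θ j) = (b.coord j).smulRight 1 from LinearMap.congr_fun this X
  refine b.ext fun i => ?_
  simp [wd.I_θ, Finsupp.single_apply]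

theorem I_apply_Ω (X : 𝔤) (j : ι) : wd.I X (wd.Ω j) = 0 := by
  suffices wd.I.flip (wd.Ω j) = 0 from LinearMap.congr_fun this X
  exact b.ext fun i => wd.I_Ω i j

theorem θ_mul_θ_comm (i j : ι) : wd.θ i * wd.θ j = -(wd.θ j * wd.θ i) := by
  rw [wd.supercomm (wd.θ_mem i) (wd.θ_mem j), mul_one, sgn_one, neg_one_smul]

theorem sum_structConst_smul_θ_mul_θ (k : ι) :
    ∑ j, ∑ i, structConst b k i j • (wd.θ j * wd.θ i) = (2 : ℝ) • (wd.d (wd.θ k) - wd.Ω k) := by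
  have swap : ∑ j, ∑ i, structConst b k i j • (wd.θ j * wd.θ i) =
      -∑ i, ∑ j, structConst b k i j • (wd.θ i * wd.θ j) := by
    rw [Finset.sum_comm]
    simp only [← Finset.sum_neg_distrib, ← smul_neg, ← wd.θ_mul_θ_comm]
  rw [wd.d_θ, add_sub_cancel_right, smul_smul, swap]
  norm_num

end WeilData

theorem AId_pow_card_add_one (hε : wd.IsParity ε) : AId b wd op ε ^ (Fintype.card ι + 1) = 0 := by
  refine sum_pow_card_add_one_eq_zero Finset.univ (fun i j => sub_eq_zero.1 ?_) fun i => ?_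
  · refine (hε.lie_koszulTensor_koszulTensor (wd.θ_mem i) (wd.θ_mem j) _ _).trans ?_
    rw [op.I_mul_I_add, TensorProduct.map_zero_right, smul_zero]
  · rw [pow_two, AOp, ← TensorProduct.map_mul, op.I_mul_self, TensorProduct.map_zero_right]

theorem lie_AId_koszulTensor_I (hε : wd.IsParity ε) {n : ℤ} {u : W} (hu : u ∈ wd.grading n)
    (X : 𝔤) : ⁅AId b wd op ε, koszulTensor ε u (op.I X)⁆ = 0 := by
  rw [AId, sum_lie]
  refine Finset.sum_eq_zero fun i _ => ?_
  refine (hε.lie_koszulTensor_koszulTensor (wd.θ_mem i) hu _ _).trans ?_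
  rw [op.I_mul_I_add, TensorProduct.map_zero_right, smul_zero]

theorem lie_AId_ITot (hε : wd.IsParity ε) (X : 𝔤) :
    ⁅AId b wd op ε, ITot wd op ε X⁆ = -TensorProduct.map ε (op.I X) := by
  have lie_rTensor (i : ι) : ⁅AOp b wd op ε i i, LinearMap.rTensor A (wd.I X)⁆ =
      -koszulTensor ε 1 (op.I (b.repr X i • b i)) := by
    refine (lie_koszulTensor_rTensor (hε.mul_I X) (wd.I_mul_of_mem_one X (wd.θ_mem i)) _).trans ?_
    rw [wd.I_apply_θ, map_smul, map_smul, map_smul, LinearMap.smul_apply]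
  rw [ITot, lie_add, ← koszulTensor_one, lie_AId_koszulTensor_I wd op hε wd.one_mem, add_zero,
    AId, sum_lie, Finset.sum_congr rfl fun i _ => lie_rTensor i, Finset.sum_neg_distrib, ← map_sum,
    ← map_sum, b.sum_repr]

theorem IBRST_eq_rTensor (hε : wd.IsParity ε) (X : 𝔤) :
    IBRST b wd op ε X = LinearMap.rTensor A (wd.I X) := by
  have lie_lie : ⁅AId b wd op ε, ⁅AId b wd op ε, ITot wd op ε X⁆⁆ = 0 := by
    rw [lie_AId_ITot wd op hε, lie_neg, ← koszulTensor_one,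
      lie_AId_koszulTensor_I wd op hε wd.one_mem, neg_zero]
  rw [IBRST, expEnd_conj_eq_of_lie_lie_lie_eq_zero (AId_pow_card_add_one wd op hε)
    (by rw [lie_lie, lie_zero]), lie_lie, smul_zero, lie_AId_ITot wd op hε, ITot, add_zero,
    add_neg_cancel_right]

theorem lie_AId_DTot (hε : wd.IsParity ε) :
    ⁅AId b wd op ε, DTot wd op ε⁆ =
      ∑ i, TensorProduct.map (LinearMap.mulLeft ℝ (wd.θ i)) (op.L (b i)) -
        ∑ i, koszulTensor ε (wd.d (wd.θ i)) (op.I (b i)) := by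
  rw [AId, sum_lie, ← Finset.sum_sub_distrib]
  refine Finset.sum_congr rfl fun i _ => ?_
  have lie_rTensor_d : ⁅AOp b wd op ε i i, LinearMap.rTensor A wd.d⁆ =
      -koszulTensor ε (wd.d (wd.θ i)) (op.I (b i)) :=
    lie_koszulTensor_rTensor hε.mul_d (wd.d_mul_of_mem_one (wd.θ_mem i)) _
  have lie_parity_d : ⁅AOp b wd op ε i i, TensorProduct.map ε op.d⁆ =
      TensorProduct.map (LinearMap.mulLeft ℝ (wd.θ i)) (op.L (b i)) := by
    rw [← koszulTensor_one]
    refine (hε.lie_koszulTensor_koszulTensor (wd.θ_mem i) wd.one_mem _ _).trans ?_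
    rw [mul_one, ← op.cartan]
    exact one_smul ℤ _
  rw [DTot, lie_add, lie_rTensor_d, lie_parity_d, neg_add_eq_sub]

theorem lie_AId_lie_AId_DTot (hε : wd.IsParity ε) :
    ⁅AId b wd op ε, ⁅AId b wd op ε, DTot wd op ε⁆⁆ =
      ∑ k, koszulTensor ε ((2 : ℝ) • (wd.d (wd.θ k) - wd.Ω k)) (op.I (b k)) := by
  have lie_θ_L (j i : ι) :
      ⁅AOp b wd op ε j j, TensorProduct.map (LinearMap.mulLeft ℝ (wd.θ i)) (op.L (b i))⁆ =
        ∑ k, koszulTensor ε (structConst b k i j • (wd.θ j * wd.θ i)) (op.I (b k)) := by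
    refine (hε.lie_koszulTensor_tensorMap_mulLeft (wd.θ_mem j) (wd.θ_mem i) _ _).trans ?_
    rw [op.lie_I_L, sgn_one, map_neg, neg_one_smul, neg_neg]
    conv_lhs => rw [← b.sum_repr ⁅b i, b j⁆]
    simp only [map_sum, map_smul, LinearMap.smul_apply, structConst]
  have lie_dθ_I (i : ι) : ⁅AId b wd op ε, koszulTensor ε (wd.d (wd.θ i)) (op.I (b i))⁆ = 0 :=
    lie_AId_koszulTensor_I wd op hε (wd.d_mem (wd.θ_mem i)) (b i)
  calc ⁅AId b wd op ε, ⁅AId b wd op ε, DTot wd op ε⁆⁆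
      = ∑ i, ∑ j, ∑ k, koszulTensor ε (structConst b k i j • (wd.θ j * wd.θ i)) (op.I (b k)) := by
        rw [lie_AId_DTot wd op hε, lie_sub, lie_sum, lie_sum,
          Finset.sum_eq_zero fun i _ => lie_dθ_I i, sub_zero, AId]
        simp only [sum_lie, lie_θ_L]
    _ = ∑ k, koszulTensor ε (∑ j, ∑ i, structConst b k i j • (wd.θ j * wd.θ i)) (op.I (b k)) := by
        simp only [map_sum, LinearMap.sum_apply]
        rw [Finset.sum_comm, Finset.sum_comm_cycle]
    _ = _ := by simp only [wd.sum_structConst_smul_θ_mul_θ]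

theorem DBRST_eq_DTot_add_sum_LOp (hε : wd.IsParity ε) :
    DBRST b wd op ε = DTot wd op ε + ∑ i, LOp b wd op ε i i := by
  have lie_lie_lie : ⁅AId b wd op ε, ⁅AId b wd op ε, ⁅AId b wd op ε, DTot wd op ε⁆⁆⁆ = 0 := by
    rw [lie_AId_lie_AId_DTot wd op hε, lie_sum]
    exact Finset.sum_eq_zero fun k _ => lie_AId_koszulTensor_I wd op hε (Submodule.smul_mem _ _
      (Submodule.sub_mem _ (wd.d_mem (wd.θ_mem k)) (wd.Ω_mem k))) (b k)
  have LOp_eq (i : ι) : LOp b wd op ε i i =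
      TensorProduct.map (LinearMap.mulLeft ℝ (wd.θ i)) (op.L (b i)) -
        koszulTensor ε (wd.Ω i) (op.I (b i)) := rfl
  rw [DBRST, expEnd_conj_eq_of_lie_lie_lie_eq_zero (AId_pow_card_add_one wd op hε) lie_lie_lie,
    lie_AId_lie_AId_DTot wd op hε, lie_AId_DTot wd op hε]
  simp only [LOp_eq, map_smul, map_sub, LinearMap.smul_apply, LinearMap.sub_apply,
    Finset.sum_sub_distrib, ← Finset.smul_sum, inv_smul_smul₀ (two_ne_zero' ℝ)]
  abel

end Conjugation

section SymmetricPart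

namespace Operation

variable (op : Operation 𝔤 A)

theorem L_one (X : 𝔤) : op.L X 1 = 0 := by
  simpa using op.L_mul X 1 1

theorem I_one (X : 𝔤) : op.I X 1 = 0 := by
  simpa [sgn] using op.I_mul X op.one_mem 1

theorem d_one : op.d 1 = 0 := by
  simpa [sgn] using op.d_mul op.one_mem 1

theorem gradedMonoid : SetLike.GradedMonoid op.grading where
  one_mem := op.one_mem
  mul_mem _ _ _ _ := op.mul_mem

end Operation

namespace WeilData

variable {b : Module.Basis ι ℝ 𝔤} (wd : WeilData ι b W)

theorem Ω_mul_comm (i : ι) (w : W) : wd.Ω i * w = w * wd.Ω i :=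
  wd.mul_comm_of_mem_grading_two_mul (n := 1) (wd.Ω_mem i) w

/-- The inclusion of `S𝔤* = ℝ[Ω^i]` into the Weil algebra. It is first defined into the centre,
because `MvPolynomial.aeval` takes values in commutative algebras. -/
def symHom : MvPolynomial ι ℝ →ₐ[ℝ] W :=
  (Subalgebra.center ℝ W).val.comp <| MvPolynomial.aeval fun i =>
    ⟨wd.Ω i, Subalgebra.mem_center_iff.2 fun w => (wd.Ω_mul_comm i w).symm⟩

theorem symHom_X (i : ι) : wd.symHom (MvPolynomial.X i) = wd.Ω i := by
  simp [symHom]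

theorem symHom_monomial (m : ι →₀ ℕ) : wd.symHom (MvPolynomial.monomial m 1) =
    ((Finset.univ.sort (· ≤ ·)).map fun i => wd.Ω i ^ m i).prod := by
  have monomial_eq : MvPolynomial.monomial m (1 : ℝ) =
      ((Finset.univ.sort (· ≤ ·)).map fun i => MvPolynomial.X i ^ m i).prod := by
    rw [MvPolynomial.monomial_eq, map_one, one_mul, Finsupp.prod_fintype _ _ fun i => pow_zero _,
      ← Finset.prod_map_toList, ((Finset.sort_perm_toList _ _).map _).prod_eq]
  simp only [monomial_eq, map_list_prod, List.map_map, Function.comp_def, map_pow, symHom_X]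

theorem symHom_monomial_mem_grading (m : ι →₀ ℕ) :
    wd.symHom (MvPolynomial.monomial m 1) ∈ wd.grading (2 * m.degree) := by
  have := wd.gradedMonoid
  induction m using Finsupp.induction_linear with
  | zero => simpa using wd.one_mem
  | add m n hm hn =>
    rw [← one_mul (1 : ℝ), ← MvPolynomial.monomial_mul, map_mul, map_add, Nat.cast_add, mul_add]
    exact wd.mul_mem hm hn
  | single i k =>
    rw [← MvPolynomial.X_pow_eq_monomial, map_pow, symHom_X]
    simpa [mul_comm] using SetLike.pow_mem_graded k (wd.Ω_mem i)

theorem range_symHom : LinearMap.range wd.symHom.toLinearMap = symSub b wd := by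
  rw [← Submodule.map_top, ← (MvPolynomial.basisMonomials ι ℝ).span_eq, Submodule.map_span,
    symSub, ← Set.range_comp]
  congr 1
  rw [← Finsupp.equivFunOnFinite.surjective.range_comp]
  exact congrArg Set.range (funext fun m => by simp [symHom_monomial])

theorem map_symHom_mul {f : Module.End ℝ W} (hf : ∀ i, Commute f (LinearMap.mulLeft ℝ (wd.Ω i)))
    (p : MvPolynomial ι ℝ) (w : W) : f (wd.symHom p * w) = wd.symHom p * f w := by
  induction p using MvPolynomial.induction_on generalizing w with
  | C r => simp [← MvPolynomial.algebraMap_eq, ← Algebra.smul_def]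
  | add p q hp hq => rw [map_add, add_mul, map_add, hp, hq, add_mul]
  | mul_X p i hp =>
    rw [map_mul wd.symHom, symHom_X, mul_assoc, hp, mul_assoc]
    exact congrArg _ (LinearMap.congr_fun (hf i) w)

theorem map_symHom {f : Module.End ℝ W} (hf : ∀ i, Commute f (LinearMap.mulLeft ℝ (wd.Ω i)))
    (p : MvPolynomial ι ℝ) : f (wd.symHom p) = wd.symHom p * f 1 := by
  rw [← wd.map_symHom_mul hf, mul_one]

theorem parity_symHom {ε : Module.End ℝ W} (hε : wd.IsParity ε) (p : MvPolynomial ι ℝ) :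
    ε (wd.symHom p) = wd.symHom p := by
  have commute_Ω (i : ι) : Commute ε (LinearMap.mulLeft ℝ (wd.Ω i)) :=
    (hε.mul_mulLeft (wd.Ω_mem i)).trans (one_smul ℤ _)
  rw [wd.map_symHom commute_Ω, hε 0 1 wd.one_mem, sgn, if_pos Even.zero, one_smul, mul_one]

theorem commute_I_mulLeft_Ω (X : 𝔤) (i : ι) :
    Commute (wd.I X) (LinearMap.mulLeft ℝ (wd.Ω i)) := by
  ext w
  have := wd.I_mul X (wd.Ω_mem i) w
  rw [wd.I_apply_Ω, zero_mul, zero_add] at this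
  exact this.trans (one_smul ℤ _)

theorem I_symHom (X : 𝔤) (p : MvPolynomial ι ℝ) : wd.I X (wd.symHom p) = 0 := by
  rw [wd.map_symHom (wd.commute_I_mulLeft_Ω X), wd.I_one, mul_zero]

theorem L_symHom (i : ι) (p : MvPolynomial ι ℝ) :
    wd.L (b i) (wd.symHom p) = wd.symHom (coadL b i p) := by
  induction p using MvPolynomial.induction_on with
  | C r =>
    have : wd.symHom (MvPolynomial.C r) = r • 1 := by
      rw [← MvPolynomial.algebraMap_eq, AlgHom.commutes, Algebra.algebraMap_eq_smul_one]
    simp [this, wd.L_one, coadL]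
  | add p q hp hq => rw [map_add, map_add, hp, hq, map_add, map_add]
  | mul_X p j hp =>
    rw [map_mul, wd.L_mul, hp, symHom_X, wd.L_Ω]
    simp [coadL, symHom_X, wd.Ω_mul_comm, add_comm]

theorem d_Ω_eq_sum_θ_mul_L (j : ι) : wd.d (wd.Ω j) = ∑ i, wd.θ i * wd.L (b i) (wd.Ω j) := by
  simp only [wd.d_Ω, wd.L_Ω, mul_neg, Finset.mul_sum, mul_smul_comm, Finset.sum_neg_distrib]

theorem d_symHom (p : MvPolynomial ι ℝ) :
    wd.d (wd.symHom p) = ∑ i, wd.θ i * wd.L (b i) (wd.symHom p) := by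
  let E : Module.End ℝ W := wd.d - ∑ i, LinearMap.mulLeft ℝ (wd.θ i) * wd.L (b i)
  have E_apply (w : W) : E w = wd.d w - ∑ i, wd.θ i * wd.L (b i) w := by
    simp [E, LinearMap.sum_apply]
  have commute_Ω (j : ι) : Commute E (LinearMap.mulLeft ℝ (wd.Ω j)) := by
    ext w
    have θ_mul_Ω_mul (i : ι) (v : W) : wd.θ i * (wd.Ω j * v) = wd.Ω j * (wd.θ i * v) := by
      rw [← mul_assoc, ← wd.Ω_mul_comm, mul_assoc]
    have sgn_two : sgn 2 = 1 := sgn_two_mul 1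
    simp only [Module.End.mul_apply, LinearMap.mulLeft_apply, E_apply, wd.d_mul (wd.Ω_mem j),
      wd.L_mul, wd.d_Ω_eq_sum_θ_mul_L, sgn_two, one_smul, mul_add, Finset.sum_add_distrib,
      θ_mul_Ω_mul, Finset.sum_mul, mul_assoc, mul_sub, Finset.mul_sum, add_sub_add_left_eq_sub]
  have := wd.map_symHom commute_Ω p
  rw [E_apply, E_apply, wd.d_one] at this
  simpa [wd.L_one, sub_eq_zero] using this

end WeilData

end SymmetricPart

section Horizontal

namespace WeilData

variable {b : Module.Basis ι ℝ 𝔤} (wd : WeilData ι b W)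

/-- The operator `Σ_k θ^k I_k` on the Weil algebra, which counts the factors `θ^i` of a monomial. -/
def numberOp : Module.End ℝ W :=
  ∑ k, LinearMap.mulLeft ℝ (wd.θ k) * wd.I (b k)

theorem numberOp_apply (w : W) : wd.numberOp w = ∑ k, wd.θ k * wd.I (b k) w := by
  simp [numberOp, LinearMap.sum_apply]

theorem numberOp_θ_mul (i : ι) (w : W) :
    wd.numberOp (wd.θ i * w) = wd.θ i * w + wd.θ i * wd.numberOp w := by
  have summand (k : ι) : wd.θ k * wd.I (b k) (wd.θ i * w) =
      (if k = i then wd.θ i * w else 0) + wd.θ i * (wd.θ k * wd.I (b k) w) := by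
    rw [wd.I_mul_of_mem_one _ (wd.θ_mem i), wd.I_θ, ← mul_assoc (wd.θ i), wd.θ_mul_θ_comm i k]
    split_ifs with hki <;> simp [hki, mul_add, mul_assoc, sub_eq_add_neg]
  simp [numberOp_apply, summand, Finset.sum_add_distrib, Finset.mul_sum]

theorem numberOp_prod_map_θ (l : List ι) :
    wd.numberOp (l.map wd.θ).prod = (l.length : ℝ) • (l.map wd.θ).prod := by
  induction l with
  | nil => simp [numberOp_apply, wd.I_one]
  | cons i l ih =>
    rw [List.map_cons, List.prod_cons, numberOp_θ_mul, ih, mul_smul_comm, List.length_cons,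
      Nat.cast_succ, add_smul, one_smul, add_comm]

theorem commute_numberOp_mulLeft_Ω (i : ι) :
    Commute wd.numberOp (LinearMap.mulLeft ℝ (wd.Ω i)) := by
  refine Commute.sum_left _ _ _ fun k _ => Commute.mul_left ?_ (wd.commute_I_mulLeft_Ω (b k) i)
  exact (Operation.mulLeft_mul_mulLeft_of_mem (wd.θ_mem k) (wd.Ω_mem i)).trans (one_smul ℤ _)

/-- The basis of the Weil algebra consisting of the monomials `Ω^m θ^S`. -/
def monomialBasis : Module.Basis ((ι →₀ ℕ) × Finset ι) ℝ W :=
  wd.free.choose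

theorem monomialBasis_apply (q : (ι →₀ ℕ) × Finset ι) :
    wd.monomialBasis q = wd.symHom (MvPolynomial.monomial q.1 1) *
      ((q.2.sort (· ≤ ·)).map wd.θ).prod := by
  rw [symHom_monomial]
  exact wd.free.choose_spec q

theorem monomialBasis_empty (m : ι →₀ ℕ) :
    wd.monomialBasis (m, ∅) = wd.symHom (MvPolynomial.monomial m 1) := by
  simp [monomialBasis_apply]

theorem monomialBasis_mem_grading (q : (ι →₀ ℕ) × Finset ι) :
    wd.monomialBasis q ∈ wd.grading (2 * q.1.degree + q.2.card) := by
  have := wd.gradedMonoid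
  have θ_prod_mem := SetLike.list_prod_map_mem_graded (A := wd.grading) (q.2.sort (· ≤ ·))
    (fun _ => 1) wd.θ fun i _ => wd.θ_mem i
  rw [monomialBasis_apply]
  simpa using wd.mul_mem (wd.symHom_monomial_mem_grading q.1) θ_prod_mem

theorem numberOp_monomialBasis (q : (ι →₀ ℕ) × Finset ι) :
    wd.numberOp (wd.monomialBasis q) = (q.2.card : ℝ) • wd.monomialBasis q := by
  rw [monomialBasis_apply, wd.map_symHom_mul wd.commute_numberOp_mulLeft_Ω, numberOp_prod_map_θ,
    Finset.length_sort, mul_smul_comm]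

theorem ker_numberOp_le_symSub : LinearMap.ker wd.numberOp ≤ symSub b wd := by
  refine (ker_le_span_of_basis_eigenvectors _ wd.numberOp_monomialBasis).trans
    (Submodule.span_le.2 ?_)
  rintro _ ⟨⟨m, S⟩, hS, rfl⟩
  obtain rfl : S = ∅ := by simpa using hS
  rw [monomialBasis_empty, ← range_symHom]
  exact ⟨_, rfl⟩

variable (A) in
/-- The inclusion `S𝔤* ⊗ A → W ⊗ A`. -/
def symTensorHom : MvPolynomial ι ℝ ⊗[ℝ] A →ₗ[ℝ] W ⊗[ℝ] A :=
  LinearMap.rTensor A wd.symHom.toLinearMap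

theorem symTensorHom_tmul (p : MvPolynomial ι ℝ) (a : A) :
    wd.symTensorHom A (p ⊗ₜ a) = wd.symHom p ⊗ₜ a :=
  rfl

variable (op : Operation 𝔤 A)

theorem range_symTensorHom : LinearMap.range (wd.symTensorHom A) = symTensor b wd op := by
  refine le_antisymm (range_tensorMap_le_iff.2 fun p a => ?_) (range_tensorMap_le_iff.2 ?_)
  · exact ⟨⟨wd.symHom p, wd.range_symHom ▸ LinearMap.mem_range_self _ p⟩ ⊗ₜ a, rfl⟩
  · rintro ⟨w, hw⟩ a
    obtain ⟨p, rfl⟩ := wd.range_symHom.ge hw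
    exact ⟨p ⊗ₜ a, rfl⟩

theorem iInf_ker_rTensor_I :
    ⨅ X, LinearMap.ker (LinearMap.rTensor A (wd.I X)) = symTensor b wd op := by
  refine le_antisymm (fun x hx => ?_) ?_
  · rw [Submodule.mem_iInf] at hx
    have rTensor_numberOp : LinearMap.rTensor A wd.numberOp = ∑ k,
        LinearMap.rTensor A (LinearMap.mulLeft ℝ (wd.θ k)) * LinearMap.rTensor A (wd.I (b k)) := by
      simp only [numberOp, ← LinearMap.coe_rTensorHom, map_sum]
      simp only [LinearMap.coe_rTensorHom, LinearMap.rTensor_mul]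
    have x_mem_ker : x ∈ LinearMap.ker (LinearMap.rTensor A wd.numberOp) := by
      rw [LinearMap.mem_ker, rTensor_numberOp, LinearMap.sum_apply]
      exact Finset.sum_eq_zero fun k _ => by rw [Module.End.mul_apply, hx (b k), map_zero]
    rw [ker_rTensor_eq_range] at x_mem_ker
    refine range_tensorMap_le_iff.2 ?_ x_mem_ker
    exact fun w a => ⟨⟨w, wd.ker_numberOp_le_symSub w.2⟩ ⊗ₜ a, rfl⟩
  · rw [← wd.range_symTensorHom op, le_iInf_iff]
    exact fun X => range_tensorMap_le_iff.2 fun p a => by simp [wd.I_symHom]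

/-- The projection of the Weil algebra onto `S𝔤*` along the monomials containing some `θ^i`. -/
def symProj : W →ₗ[ℝ] MvPolynomial ι ℝ :=
  wd.monomialBasis.constr ℝ fun q => if q.2 = ∅ then MvPolynomial.monomial q.1 1 else 0

theorem symProj_monomialBasis (q : (ι →₀ ℕ) × Finset ι) :
    wd.symProj (wd.monomialBasis q) = if q.2 = ∅ then MvPolynomial.monomial q.1 1 else 0 :=
  wd.monomialBasis.constr_basis ℝ _ q

theorem symProj_comp_symHom : wd.symProj ∘ₗ wd.symHom.toLinearMap = LinearMap.id := by
  refine (MvPolynomial.basisMonomials ι ℝ).ext fun m => ?_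
  simp [← monomialBasis_empty, symProj_monomialBasis]

theorem symProj_mem_span {n : ℤ} {w : W} (hw : w ∈ wd.grading n) : wd.symProj w ∈ Submodule.span ℝ
    ((fun m => MvPolynomial.monomial m 1) '' {m : ι →₀ ℕ | 2 * (m.degree : ℤ) = n}) := by
  let _ := wd.decomposition
  refine Submodule.mem_comap.1 (Submodule.span_le.2 ?_
    (mem_span_of_homogeneous_basis wd.grading _ wd.monomialBasis_mem_grading hw))
  rintro _ ⟨⟨m, S⟩, hmS, rfl⟩
  rw [SetLike.mem_coe, Submodule.mem_comap, symProj_monomialBasis]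
  split_ifs with hS
  · obtain rfl : S = ∅ := hS
    exact Submodule.subset_span ⟨m, by simpa using hmS, rfl⟩
  · exact Submodule.zero_mem _

end WeilData

end Horizontal

section CartanModel

variable {b : Module.Basis ι ℝ 𝔤} (wd : WeilData ι b W) (op : Operation 𝔤 A)

namespace WeilData

variable (A) in
theorem rTensor_symProj_symTensorHom (x : MvPolynomial ι ℝ ⊗[ℝ] A) :
    LinearMap.rTensor A wd.symProj (wd.symTensorHom A x) = x := by
  rw [symTensorHom, ← LinearMap.rTensor_comp_apply, symProj_comp_symHom, LinearMap.rTensor_id_apply]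

variable (A) in
theorem symTensorHom_injective : Function.Injective (wd.symTensorHom A) :=
  Function.LeftInverse.injective (wd.rTensor_symProj_symTensorHom A)

theorem symHom_mem_grading {k : ℕ} {p : MvPolynomial ι ℝ}
    (hp : p ∈ MvPolynomial.homogeneousSubmodule ι ℝ k) : wd.symHom p ∈ wd.grading (2 * k) := by
  rw [p.as_sum, map_sum]
  refine Submodule.sum_mem _ fun m hm => ?_
  have degree_m : m.degree = k := by
    rw [Finsupp.degree_eq_weight_one]
    exact hp (MvPolynomial.mem_support_iff.1 hm)
  have monomial_eq : MvPolynomial.monomial m (p.coeff m) =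
      p.coeff m • MvPolynomial.monomial m (1 : ℝ) := by
    rw [MvPolynomial.smul_monomial, smul_eq_mul, mul_one]
  rw [monomial_eq, map_smul, ← degree_m]
  exact Submodule.smul_mem _ _ (wd.symHom_monomial_mem_grading m)

theorem grCartan_le_comap_symTensorHom (n : ℤ) :
    grCartan b op n ≤ (grTensor b wd op n).comap (wd.symTensorHom A) := by
  refine iSup_le fun k => range_tensorMap_le_iff.2 fun p a => ?_
  exact Submodule.mem_iSup_of_mem (2 * (k : ℤ)) ⟨⟨_, wd.symHom_mem_grading p.2⟩ ⊗ₜ a, rfl⟩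

theorem grTensor_le_comap_rTensor_symProj (n : ℤ) :
    grTensor b wd op n ≤ (grCartan b op n).comap (LinearMap.rTensor A wd.symProj) := by
  refine iSup_le fun p => range_tensorMap_le_iff.2 fun w a => ?_
  refine Submodule.mem_comap.1 (Submodule.span_le.2 ?_ (wd.symProj_mem_span w.2) :
    _ ∈ (grCartan b op n).comap ((TensorProduct.mk ℝ _ A).flip a))
  rintro _ ⟨m, rfl, rfl⟩
  exact Submodule.mem_iSup_of_mem m.degree
    ⟨⟨_, MvPolynomial.isHomogeneous_monomial 1 rfl⟩ ⊗ₜ a, rfl⟩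

theorem symTensorHom_mem_grTensor_iff {n : ℤ} {x : MvPolynomial ι ℝ ⊗[ℝ] A} :
    wd.symTensorHom A x ∈ grTensor b wd op n ↔ x ∈ grCartan b op n := by
  refine ⟨fun hx => ?_, fun hx => wd.grCartan_le_comap_symTensorHom op n hx⟩
  simpa only [Submodule.mem_comap, rTensor_symProj_symTensorHom] using
    wd.grTensor_le_comap_rTensor_symProj op n hx

theorem cartanDW_symTensorHom (x : MvPolynomial ι ℝ ⊗[ℝ] A) :
    cartanDW b wd op (wd.symTensorHom A x) = wd.symTensorHom A (cartanD b op x) := by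
  suffices cartanDW b wd op ∘ₗ wd.symTensorHom A = wd.symTensorHom A ∘ₗ cartanD b op from
    LinearMap.congr_fun this x
  refine TensorProduct.ext' fun p a => ?_
  simp [cartanDW, cartanD, symTensorHom_tmul, LinearMap.sum_apply, symHom_X]

theorem LTot_symTensorHom (i : ι) (x : MvPolynomial ι ℝ ⊗[ℝ] A) :
    LTot wd op (b i) (wd.symTensorHom A x) = wd.symTensorHom A (totL b op i x) := by
  suffices LTot wd op (b i) ∘ₗ wd.symTensorHom A = wd.symTensorHom A ∘ₗ totL b op i from
    LinearMap.congr_fun this x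
  refine TensorProduct.ext' fun p a => ?_
  simp [LTot, totL, symTensorHom_tmul, L_symHom]

theorem symTensorHom_mem_iInf_ker_LTot_iff {x : MvPolynomial ι ℝ ⊗[ℝ] A} :
    wd.symTensorHom A x ∈ ⨅ X, LinearMap.ker (LTot wd op X) ↔ x ∈ invCartan b op := by
  have iInf_ker_LTot : ⨅ X, LinearMap.ker (LTot wd op X) =
      ⨅ i, LinearMap.ker (LTot wd op (b i)) :=
    iInf_ker_eq_iInf_ker_basis b
      (LinearMap.rTensorHom A ∘ₗ wd.L + LinearMap.lTensorHom W ∘ₗ op.L)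
  simp only [iInf_ker_LTot, invCartan, Submodule.mem_iInf, LinearMap.mem_ker, LTot_symTensorHom,
    map_eq_zero_iff _ (wd.symTensorHom_injective A)]

end WeilData

variable {ε : Module.End ℝ W}

theorem iInf_ker_IBRST (hε : wd.IsParity ε) :
    ⨅ X, LinearMap.ker (IBRST b wd op ε X) = symTensor b wd op := by
  simp only [IBRST_eq_rTensor wd op hε, wd.iInf_ker_rTensor_I op]

theorem basBRST_eq_symTensor_inf (hε : wd.IsParity ε) :
    basBRST b wd op ε = symTensor b wd op ⊓ ⨅ X, LinearMap.ker (LTot wd op X) := by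
  rw [basBRST, iInf_ker_IBRST wd op hε]

theorem DBRST_symTensorHom (hε : wd.IsParity ε) (x : MvPolynomial ι ℝ ⊗[ℝ] A) :
    DBRST b wd op ε (wd.symTensorHom A x) = cartanDW b wd op (wd.symTensorHom A x) +
      ∑ i, LinearMap.rTensor A (LinearMap.mulLeft ℝ (wd.θ i))
        (LTot wd op (b i) (wd.symTensorHom A x)) := by
  suffices DBRST b wd op ε ∘ₗ wd.symTensorHom A =
      (cartanDW b wd op + ∑ i, LinearMap.rTensor A (LinearMap.mulLeft ℝ (wd.θ i)) ∘ₗ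
        LTot wd op (b i)) ∘ₗ wd.symTensorHom A by
    simpa [LinearMap.sum_apply] using LinearMap.congr_fun this x
  refine TensorProduct.ext' fun p a => ?_
  simp only [DBRST_eq_DTot_add_sum_LOp wd op hε, DTot, LOp, LTot, cartanDW, LinearMap.comp_apply,
    wd.symTensorHom_tmul, LinearMap.add_apply, LinearMap.sub_apply, LinearMap.sum_apply,
    LinearMap.rTensor_tmul, LinearMap.lTensor_tmul, TensorProduct.map_tmul, map_add,
    wd.parity_symHom hε, LinearMap.mulLeft_apply, wd.d_symHom, TensorProduct.sum_tmul,
    Finset.sum_add_distrib, Finset.sum_sub_distrib]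
  abel

theorem DBRST_eq_cartanDW_of_mem_basBRST (hε : wd.IsParity ε) {x : W ⊗[ℝ] A}
    (hx : x ∈ basBRST b wd op ε) : DBRST b wd op ε x = cartanDW b wd op x := by
  rw [basBRST_eq_symTensor_inf wd op hε, ← wd.range_symTensorHom op] at hx
  obtain ⟨⟨y, rfl⟩, LTot_eq_zero⟩ := hx
  rw [SetLike.mem_coe, Submodule.mem_iInf] at LTot_eq_zero
  rw [DBRST_symTensorHom wd op hε, Finset.sum_eq_zero, add_zero]
  exact fun i _ => by rw [LTot_eq_zero (b i), map_zero]

theorem map_symTensorHom_invCartan_inf_grCartan (hε : wd.IsParity ε) (n : ℤ) :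
    (invCartan b op ⊓ grCartan b op n).map (wd.symTensorHom A) =
      basBRST b wd op ε ⊓ grTensor b wd op n := by
  have comap_eq : invCartan b op ⊓ grCartan b op n =
      ((⨅ X, LinearMap.ker (LTot wd op X)) ⊓ grTensor b wd op n).comap (wd.symTensorHom A) := by
    ext x
    simp only [Submodule.mem_comap, Submodule.mem_inf, wd.symTensorHom_mem_iInf_ker_LTot_iff,
      wd.symTensorHom_mem_grTensor_iff]
  rw [comap_eq, Submodule.map_comap_eq, wd.range_symTensorHom op,
    basBRST_eq_symTensor_inf wd op hε, inf_assoc]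

theorem DBRST_symTensorHom_of_mem_invCartan (hε : wd.IsParity ε) {x : MvPolynomial ι ℝ ⊗[ℝ] A}
    (hx : x ∈ invCartan b op) :
    DBRST b wd op ε (wd.symTensorHom A x) = wd.symTensorHom A (cartanD b op x) := by
  rw [DBRST_eq_cartanDW_of_mem_basBRST wd op hε, wd.cartanDW_symTensorHom]
  rw [basBRST_eq_symTensor_inf wd op hε, ← wd.range_symTensorHom op]
  exact ⟨LinearMap.mem_range_self _ x, (wd.symTensorHom_mem_iInf_ker_LTot_iff op).2 hx⟩

end CartanModel

section Cohomology

variable {M N : Type} [AddCommGroup M] [Module ℝ M] [AddCommGroup N] [Module ℝ N]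
  {f : M →ₗ[ℝ] N} {dM : Module.End ℝ M} {dN : Module.End ℝ N}
  {P : ℤ → Submodule ℝ M} {Q : ℤ → Submodule ℝ N}

theorem map_cocycles (hf : Function.Injective f) {n : ℤ} (hPQ : (P n).map f = Q n)
    (hd : ∀ x ∈ P n, dN (f x) = f (dM x)) :
    (cocycles dM P n).map f = cocycles dN Q n := by
  rw [cocycles, cocycles, ← hPQ, Submodule.map_inf_eq_map_inf_comap]
  congr 1
  ext x
  simp +contextual [hd, map_eq_zero_iff f hf]

theorem map_coboundaries {n : ℤ} (hPQ : (P n).map f = Q n)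
    (hd : ∀ x ∈ P n, dN (f x) = f (dM x)) : ((P n).map dM).map f = (Q n).map dN := by
  rw [← hPQ]
  refine SetLike.coe_injective ?_
  simpa only [Submodule.map_coe, Set.image_image] using
    Set.image_congr fun x hx => (hd x hx).symm

/-- The isomorphism of cocycles induced by an injective map which identifies the degree-`n` parts
of two graded subcomplexes. -/
def cocyclesEquivOfInjective (hf : Function.Injective f) {n : ℤ} (hPQ : (P n).map f = Q n)
    (hd : ∀ x ∈ P n, dN (f x) = f (dM x)) : cocycles dM P n ≃ₗ[ℝ] cocycles dN Q n :=
  (Submodule.equivMapOfInjective f hf _).trans (LinearEquiv.ofEq _ _ (map_cocycles hf hPQ hd))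

theorem map_cocyclesEquivOfInjective (hf : Function.Injective f) {n : ℤ}
    (hPQ : (P n).map f = Q n) (hd : ∀ x ∈ P n, dN (f x) = f (dM x)) (B : Submodule ℝ M) :
    (B.comap (cocycles dM P n).subtype).map
        (cocyclesEquivOfInjective hf hPQ hd : cocycles dM P n →ₗ[ℝ] cocycles dN Q n) =
      (B.map f).comap (cocycles dN Q n).subtype := by
  ext y
  obtain ⟨x, rfl⟩ := (cocyclesEquivOfInjective hf hPQ hd).surjective y
  rw [Submodule.mem_map_equiv, LinearEquiv.symm_apply_apply]
  exact (hf.mem_set_image (s := (B : Set M))).symm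

/-- The isomorphism of cohomology induced by an injective map which identifies two graded
subcomplexes. -/
def gradedCohEquivOfInjective (hf : Function.Injective f) (hPQ : ∀ n, (P n).map f = Q n)
    (hd : ∀ n, ∀ x ∈ P n, dN (f x) = f (dM x)) (n : ℤ) :
    gradedCoh dM P n ≃ₗ[ℝ] gradedCoh dN Q n :=
  Submodule.Quotient.equiv _ _ (cocyclesEquivOfInjective hf (hPQ n) (hd n)) <| by
    rw [map_cocyclesEquivOfInjective, map_coboundaries (hPQ (n - 1)) (hd (n - 1))]

end Cohomology

/-- For `T = id`, the conjugated structure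
`B_id = (B, D_id, L, I_id)` satisfies: its horizontal subalgebra `ker I_id` is
`S𝔤* ⊗ A`; its basic subalgebra is `(S𝔤* ⊗ A)^G`; on the basic subalgebra the BRST
operator `D_id` coincides with the Cartan differential `𝖽 = 1 ⊗ d - Σ_k Ω^k ⊗ I_k`;
and consequently `H^*_bas(B_id) ≅ CH^*_G(A)`. -/
theorem brst_basic_subcomplex_is_cartan_model
    (b : Module.Basis ι ℝ 𝔤) (wd : WeilData ι b W) (op : Operation 𝔤 A)
    (ε : Module.End ℝ W) (hε : ∀ (n : ℤ), ∀ w ∈ wd.grading n, ε w = sgn n • w) :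
    (⨅ X : 𝔤, LinearMap.ker (IBRST b wd op ε X)) = symTensor b wd op ∧
    basBRST b wd op ε =
      symTensor b wd op ⊓ (⨅ X : 𝔤, LinearMap.ker (LTot wd op X)) ∧
    (∀ x ∈ basBRST b wd op ε, DBRST b wd op ε x = cartanDW b wd op x) ∧
    (∀ n : ℤ, Nonempty
      ((gradedCoh (DBRST b wd op ε) (fun m => basBRST b wd op ε ⊓ grTensor b wd op m) n)
        ≃ₗ[ℝ]
       (gradedCoh (cartanD b op) (fun m => invCartan b op ⊓ grCartan b op m) n))) := by
  have parity : wd.IsParity ε := hε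
  refine ⟨iInf_ker_IBRST wd op parity, basBRST_eq_symTensor_inf wd op parity,
    fun x hx => DBRST_eq_cartanDW_of_mem_basBRST wd op parity hx, fun n => ⟨?_⟩⟩
  exact (gradedCohEquivOfInjective (wd.symTensorHom_injective A)
    (map_symTensorHom_invCartan_inf_grCartan wd op parity)
    (fun _ _ hx => DBRST_symTensorHom_of_mem_invCartan wd op parity hx.1) n).symm

end
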